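/- Let ν ≥ 1 be an integer and s ≥ 1 a real number, and let M_s(r) := sup_{k∈ℕ} log(r^{νk}/((νk)!)^s) for r > 0. Then M_s(r) ≤ s·r^{1/s} for every r > 0, and there exists r₀ > 0 (depending on s and ν) such that (s/(4νe))·r^{1/s} ≤ M_s(r) for all r ≥ r₀. -/

import Mathlib

/-!
Put `t = r ^ (1 / s)`. The `k`-th term of the supremum is `s * log (t ^ N / N!)` with `N = ν * k`,
so everything reduces to `s = 1`. There `t ^ N / N! ≤ exp t` gives the upper bound, while
`N! ≤ N ^ N` gives `exp N ≤ t ^ N / N!` as soon as `N * e ≤ t`; some multiple `N` of `ν` lies in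
`(t / e - ν, t / e]`, whence `s * (t / e - ν) ≤ M_s(r)`, and the left side exceeds
`s * t / (4 * ν * e)` once `t ≥ 2 * ν * e`.
-/

/-- The Gevrey associated function
`M_s(r) = sup_{k ∈ ℕ} log ( r^{νk} / ((νk)!)^s )`. -/
noncomputable def gevreyM (ν : ℕ) (s : ℝ) (r : ℝ) : ℝ :=
  ⨆ k : ℕ, Real.log (r ^ (ν * k) / ((ν * k).factorial : ℝ) ^ s)

open Real

lemma log_pow_div_factorial_le {t : ℝ} (ht : 0 < t) (N : ℕ) :
    log (t ^ N / N.factorial) ≤ t :=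
  (log_le_iff_le_exp (by positivity)).2 (pow_div_factorial_le_exp t ht.le N)

lemma natCast_le_log_pow_div_factorial {t : ℝ} {N : ℕ} (hN : N * exp 1 ≤ t) :
    N ≤ log (t ^ N / N.factorial) := by
  have exp_le : exp N ≤ t ^ N / N.factorial := by
    rw [le_div_iff₀ (by positivity)]
    calc exp N * N.factorial ≤ exp N * (N : ℝ) ^ N := by
          gcongr
          exact_mod_cast N.factorial_le_pow
      _ = (N * exp 1) ^ N := by rw [mul_pow, exp_one_pow, mul_comm]
      _ ≤ t ^ N := by gcongr
  exact (le_log_iff_exp_le ((exp_pos _).trans_le exp_le)).2 exp_le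

lemma log_pow_div_factorial_rpow {s r : ℝ} (hs : s ≠ 0) (hr : 0 < r) (N : ℕ) :
    log (r ^ N / (N.factorial : ℝ) ^ s) = s * log ((r ^ (1 / s)) ^ N / N.factorial) := by
  have rpow_root : ((r ^ (1 / s)) ^ N) ^ s = r ^ N := by
    rw [rpow_pow_comm (by positivity), one_div, rpow_inv_rpow (by positivity) hs]
  rw [← log_rpow (by positivity), div_rpow (by positivity) (by positivity), rpow_root]

section GevreyBounds

variable {s r : ℝ}

lemma log_pow_div_factorial_rpow_le (hs : 0 < s) (hr : 0 < r) (N : ℕ) :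
    log (r ^ N / (N.factorial : ℝ) ^ s) ≤ s * r ^ (1 / s) := by
  rw [log_pow_div_factorial_rpow hs.ne' hr]
  gcongr
  exact log_pow_div_factorial_le (by positivity) N

lemma gevreyM_le (ν : ℕ) (hs : 0 < s) (hr : 0 < r) : gevreyM ν s r ≤ s * r ^ (1 / s) :=
  ciSup_le fun k => log_pow_div_factorial_rpow_le hs hr (ν * k)

lemma log_pow_div_factorial_rpow_le_gevreyM (ν : ℕ) (hs : 0 < s) (hr : 0 < r) (k : ℕ) :
    log (r ^ (ν * k) / ((ν * k).factorial : ℝ) ^ s) ≤ gevreyM ν s r :=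
  le_ciSup (f := fun k : ℕ => log (r ^ (ν * k) / ((ν * k).factorial : ℝ) ^ s))
    ⟨s * r ^ (1 / s), Set.forall_mem_range.2 fun j =>
      log_pow_div_factorial_rpow_le hs hr (ν * j)⟩ k

lemma mul_rpow_div_exp_sub_le_gevreyM {ν : ℕ} (hν : 0 < ν) (hs : 0 < s) (hr : 0 < r) :
    s * (r ^ (1 / s) / exp 1 - ν) ≤ gevreyM ν s r := by
  set x := r ^ (1 / s) / exp 1
  have hν' : (0 : ℝ) < ν := by exact_mod_cast hν
  let k := ⌊x / ν⌋₊
  have mul_le : ((ν * k : ℕ) : ℝ) ≤ x := by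
    have h : (k : ℝ) ≤ x / ν := Nat.floor_le (by positivity)
    rw [le_div_iff₀' hν'] at h
    exact_mod_cast h
  have lt_mul : x - ν < ((ν * k : ℕ) : ℝ) := by
    have h : x / ν < k + 1 := Nat.lt_floor_add_one _
    rw [div_lt_iff₀' hν'] at h
    push_cast
    linarith
  calc s * (x - ν) ≤ s * (ν * k : ℕ) := by gcongr
    _ ≤ s * log ((r ^ (1 / s)) ^ (ν * k) / (ν * k).factorial) := by
      gcongr
      exact natCast_le_log_pow_div_factorial ((le_div_iff₀ (exp_pos 1)).1 mul_le)
    _ = log (r ^ (ν * k) / ((ν * k).factorial : ℝ) ^ s) :=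
      (log_pow_div_factorial_rpow hs.ne' hr _).symm
    _ ≤ gevreyM ν s r := log_pow_div_factorial_rpow_le_gevreyM ν hs hr k

end GevreyBounds

lemma div_four_mul_le_sub {ν x : ℝ} (hν : 1 ≤ ν) (hx : 2 * ν ≤ x) : x / (4 * ν) ≤ x - ν := by
  rw [div_le_iff₀ (by positivity)]
  nlinarith

theorem stmt_0_general (ν : ℕ) (hν : 1 ≤ ν) (s : ℝ) (hs : 0 < s) :
    (∀ r : ℝ, 0 < r → gevreyM ν s r ≤ s * r ^ (1 / s)) ∧
    (∃ r₀ : ℝ, 0 < r₀ ∧ ∀ r : ℝ, r₀ ≤ r →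
      s / (4 * ν * Real.exp 1) * r ^ (1 / s) ≤ gevreyM ν s r) := by
  have hr₀ : 0 < (2 * ν * exp 1) ^ s := by positivity
  refine ⟨fun r hr => gevreyM_le ν hs hr, (2 * ν * exp 1) ^ s, hr₀, fun r hr => ?_⟩
  have hr_pos : 0 < r := hr₀.trans_le hr
  have root_large : 2 * ν ≤ r ^ (1 / s) / exp 1 := by
    rw [le_div_iff₀ (exp_pos 1), one_div]
    exact (le_rpow_inv_iff_of_pos (by positivity) hr_pos.le hs).2 hr
  calc s / (4 * ν * exp 1) * r ^ (1 / s) = s * (r ^ (1 / s) / exp 1 / (4 * ν)) := by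
        field_simp
    _ ≤ s * (r ^ (1 / s) / exp 1 - ν) := by
        gcongr
        exact div_four_mul_le_sub (by exact_mod_cast hν) root_large
    _ ≤ gevreyM ν s r := mul_rpow_div_exp_sub_le_gevreyM hν hs hr_pos

theorem stmt_0 (ν : ℕ) (hν : 1 ≤ ν) (s : ℝ) (hs : 1 ≤ s) :
    (∀ r : ℝ, 0 < r → gevreyM ν s r ≤ s * r ^ (1 / s)) ∧
    (∃ r₀ : ℝ, 0 < r₀ ∧ ∀ r : ℝ, r₀ ≤ r →
      s / (4 * ν * Real.exp 1) * r ^ (1 / s) ≤ gevreyM ν s r) :=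
  stmt_0_general ν hν s (zero_lt_one.trans_le hs)
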